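/- arXiv:2506.01681 — 4 statements merged into one kernel-verified Lean document; each statement's English description precedes it below -/
import Mathlib

section
/- (Non-Euclidean second prox theorem) Let ψ : E → (−∞, ∞] be a proper closed convex function differentiable over dom(∂ψ), let φ : E → (−∞, ∞] be a proper closed convex function with dom(∂φ) ⊆ dom(∂ψ), and assume ψ + I_{dom(φ)} is σ-strongly convex (I_A denotes the indicator function of A). Let b ∈ dom(∂ψ) and let a = argmin_{x ∈ E} { φ(x) + V_ψ(x, b) }. Then for every u ∈ dom(φ): ⟨∇ψ(b) − ∇ψ(a), u − a⟩ ≤ φ(u) − φ(a). -/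
/-- The subdifferential of an extended-real-valued function `ψ : E → (-∞, ∞]`
(modelled as `E → EReal`): `g ∈ ∂ψ(x)` iff `ψ x + ⟨g, y - x⟩ ≤ ψ y` for all `y`. -/
def ERealSubdiff {E : Type*} [NormedAddCommGroup E] [NormedSpace ℝ E]
    (ψ : E → EReal) (x : E) : Set (E →L[ℝ] ℝ) :=
  {g | ∀ y : E, ψ x + ((g (y - x) : ℝ) : EReal) ≤ ψ y}

/-!
Optimality of `a` makes the convex function `φ` touch the concave function
`x ↦ φ a + h a - h x`, with `h = ψ - ⟨∇ψ(b), ·⟩`, from above at `a`. Separating them by an affine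
function gives `l ∈ ∂φ(a)` with `-l ∈ ∂(h + I_{dom φ})(a)`. Hence `a ∈ dom(∂φ) ⊆ dom(∂ψ)`, so `h` is
differentiable at `a`, and `⟨-l, x - a⟩ ≤ ⟨∇h(a), x - a⟩` for `x ∈ dom φ ∩ dom ψ`. The points of
`dom φ` outside `dom ψ` are reached by density: the relative interior of `dom φ` lies in
`dom(∂φ) ⊆ dom ψ`. Therefore `⟨-∇h(a), x - a⟩ ≤ ⟨l, x - a⟩ ≤ φ x - φ a` on `dom φ`.
-/

open Set Filter Topology

section Separation

variable {X β : Type*} [TopologicalSpace X] [LinearOrder β] [TopologicalSpace β] [OrderTopology β]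
  {D : Set X} {f : X → β} {x : X} {r : β}

theorem lt_of_mem_interior_epigraph [NoMinOrder β] [DenselyOrdered β]
    (h : (x, r) ∈ interior {p : X × β | p.1 ∈ D ∧ f p.1 ≤ p.2}) : f x < r := by
  have hslice : ∀ᶠ y in 𝓝 r, x ∈ D ∧ f x ≤ y :=
    (Continuous.prodMk_right x).continuousAt.eventually (mem_interior_iff_mem_nhds.1 h)
  obtain ⟨y, ⟨-, hy⟩, hyr⟩ :=
    ((hslice.filter_mono nhdsWithin_le_nhds).and (self_mem_nhdsWithin (s := Iio r))).exists
  exact hy.trans_lt hyr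

theorem mem_interior_epigraph (hx : x ∈ interior D) (hf : ContinuousAt f x) (hr : f x < r) :
    (x, r) ∈ interior {p : X × β | p.1 ∈ D ∧ f p.1 ≤ p.2} := by
  have hlt : ∀ᶠ p : X × β in 𝓝 (x, r), f p.1 < p.2 :=
    (hf.comp continuousAt_fst).eventually_lt continuousAt_snd hr
  have hD : ∀ᶠ p : X × β in 𝓝 (x, r), p.1 ∈ D :=
    continuousAt_fst.eventually (mem_interior_iff_mem_nhds.1 hx)
  exact mem_interior_iff_mem_nhds.2 <| hD.and (hlt.mono fun _ => le_of_lt)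

theorem exists_affine_between_of_mem_interior {E : Type*} [AddCommGroup E] [Module ℝ E]
    [TopologicalSpace E] [IsTopologicalAddGroup E] [ContinuousSMul ℝ E] {D G : Set E}
    {f g : E → ℝ} (hf : ConvexOn ℝ D f) (hg : ConcaveOn ℝ G g) {q : E} (hqD : q ∈ interior D)
    (hfq : ContinuousAt f q) (hqG : q ∈ G) (hgf : ∀ x ∈ D ∩ G, g x ≤ f x) :
    ∃ (l : E →L[ℝ] ℝ) (c : ℝ), (∀ x ∈ D, l x + c ≤ f x) ∧ ∀ x ∈ G, g x ≤ l x + c := by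
  let C : Set (E × ℝ) := {p | p.1 ∈ D ∧ f p.1 ≤ p.2}
  have hC : Convex ℝ C := hf.convex_epigraph
  have hdisj : Disjoint (interior C) {p : E × ℝ | p.1 ∈ G ∧ p.2 ≤ g p.1} :=
    disjoint_left.2 fun p hp hpG => (hgf p.1 ⟨(interior_subset hp).1, hpG.1⟩).not_gt <|
      (lt_of_mem_interior_epigraph hp).trans_le hpG.2
  obtain ⟨L, s, hLint, hLG⟩ := geometric_hahn_banach_open hC.interior isOpen_interior
    hg.convex_hypograph hdisj
  have hq : (q, f q + 1) ∈ interior C := mem_interior_epigraph hqD hfq (lt_add_one _)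
  have hLD : ∀ x ∈ D, L (x, f x) ≤ s := fun x hx => by
    have hcl : (x, f x) ∈ closure (interior C) := by
      rw [hC.closure_interior_eq_closure_of_nonempty_interior ⟨_, hq⟩]
      exact subset_closure ⟨hx, le_rfl⟩
    exact closure_minimal (fun p hp => (hLint p hp).le) (isClosed_Iic.preimage L.continuous) hcl
  have hsplit : ∀ x r, L (x, r) = L (x, 0) + r * L (0, 1) := fun x r => by
    rw [← smul_eq_mul, ← map_smul, ← map_add]
    simp
  -- The separating hyperplane is not vertical because it separates two points above `q`.
  have hslope : L (0, 1) < 0 := by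
    have hlt : L (q, f q + 1) < L (q, g q) := (hLint _ hq).trans_le (hLG _ ⟨hqG, le_rfl⟩)
    have hle := hgf q ⟨interior_subset hqD, hqG⟩
    rw [hsplit, hsplit q (g q)] at hlt
    nlinarith
  let l : E →L[ℝ] ℝ := -(L (0, 1))⁻¹ • L.comp (.inl ℝ E ℝ)
  have hl : ∀ x, l x + s / L (0, 1) = (s - L (x, 0)) / L (0, 1) := fun x => by
    simp only [l, smul_apply, ContinuousLinearMap.comp_apply, ContinuousLinearMap.inl_apply,
      smul_eq_mul]
    ring
  refine ⟨l, s / L (0, 1), fun x hx => ?_, fun x hx => ?_⟩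
  · rw [hl, div_le_iff_of_neg hslope]
    linarith [hLD x hx, hsplit x (f x)]
  · rw [hl, le_div_iff_of_neg hslope]
    linarith [hLG (x, g x) ⟨hx, le_rfl⟩, hsplit x (g x)]

end Separation

section IntrinsicInterior

theorem exists_affineMap_retraction {k V P : Type*} [DivisionRing k] [AddCommGroup V] [Module k V]
    [AddTorsor V P] (s : AffineSubspace k P) [Nonempty s] :
    ∃ r : P →ᵃ[k] s, ∀ x : s, r x = x := by
  obtain ⟨π, hπ⟩ := s.direction.subtype.exists_leftInverse_of_injective s.direction.ker_subtype
  obtain ⟨p⟩ := ‹Nonempty s›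
  refine ⟨⟨fun x => π (x -ᵥ (p : P)) +ᵥ p, π, fun x v => ?_⟩, fun x => ?_⟩
  · rw [vadd_vsub_assoc, map_add, add_vadd]
  · have h : π (x -ᵥ p : s.direction) = x -ᵥ p := LinearMap.congr_fun hπ (x -ᵥ p)
    rw [AffineSubspace.coe_vsub] at h
    simp [h]

variable {E : Type*} [NormedAddCommGroup E] [NormedSpace ℝ E] [FiniteDimensional ℝ E] {D : Set E}

theorem exists_affineMap_preimage_intrinsicInterior (hne : D.Nonempty) :
    ∃ r : E →ᵃ[ℝ] E, (∀ x ∈ affineSpan ℝ D, r x = x) ∧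
      r ⁻¹' intrinsicInterior ℝ D = interior (r ⁻¹' D) := by
  have : Nonempty (affineSpan ℝ D) := (hne.mono (subset_affineSpan ℝ D)).to_subtype
  obtain ⟨r, hr⟩ := exists_affineMap_retraction (affineSpan ℝ D)
  have hsurj : Function.Surjective r.linear :=
    r.linear_surjective_iff.2 fun x => ⟨x, hr x⟩
  have hopen : IsOpenMap r :=
    AffineMap.isOpenMap_linear_iff.1 (r.linear.isOpenMap_of_finiteDimensional hsurj)
  refine ⟨(affineSpan ℝ D).subtype.comp r, fun x hx => congr_arg Subtype.val (hr ⟨x, hx⟩), ?_⟩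
  calc ((affineSpan ℝ D).subtype.comp r) ⁻¹' intrinsicInterior ℝ D
      = r ⁻¹' interior ((↑) ⁻¹' D) :=
        congr_arg (r ⁻¹' ·) (Subtype.val_injective.preimage_image _)
    _ = interior (r ⁻¹' ((↑) ⁻¹' D)) :=
      hopen.preimage_interior_eq_interior_preimage r.continuous_of_finiteDimensional _

theorem subset_closure_intrinsicInterior (hD : Convex ℝ D) :
    D ⊆ closure (intrinsicInterior ℝ D) := by
  intro x hx
  obtain ⟨q, hq⟩ := Set.Nonempty.intrinsicInterior hD ⟨x, hx⟩
  obtain ⟨r, hr, hrD⟩ := exists_affineMap_preimage_intrinsicInterior ⟨x, hx⟩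
  have hrD_self : ∀ y ∈ D, r y = y := fun y hy => hr y (subset_affineSpan ℝ D hy)
  have hqint : q ∈ interior (r ⁻¹' D) := by
    rwa [← hrD, mem_preimage, hrD_self q (intrinsicInterior_subset hq)]
  have hxcl : x ∈ closure (interior (r ⁻¹' D)) := by
    rw [(hD.affine_preimage r).closure_interior_eq_closure_of_nonempty_interior ⟨q, hqint⟩]
    exact subset_closure (by rwa [mem_preimage, hrD_self x hx])
  rw [← hrD_self x hx]
  exact map_mem_closure r.continuous_of_finiteDimensional hxcl fun y hy => by rwa [← hrD] at hy

theorem exists_affine_between_of_mem_intrinsicInterior {G : Set E} {f g : E → ℝ}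
    (hf : ConvexOn ℝ D f) (hg : ConcaveOn ℝ G g) (hG : G ⊆ affineSpan ℝ D) {q : E}
    (hqD : q ∈ intrinsicInterior ℝ D) (hqG : q ∈ G) (hgf : ∀ x ∈ D ∩ G, g x ≤ f x) :
    ∃ (l : E →L[ℝ] ℝ) (c : ℝ), (∀ x ∈ D, l x + c ≤ f x) ∧ ∀ x ∈ G, g x ≤ l x + c := by
  -- Precomposing with a retraction onto the affine span of `D` gives the domain an interior.
  obtain ⟨r, hr, hrD⟩ :=
    exists_affineMap_preimage_intrinsicInterior ⟨q, intrinsicInterior_subset hqD⟩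
  have hqint : q ∈ interior (r ⁻¹' D) := by rwa [← hrD, mem_preimage, hr q (hG hqG)]
  have hfr : ConvexOn ℝ (r ⁻¹' D) (f ∘ r) := hf.comp_affineMap r
  obtain ⟨l, c, hlD, hlG⟩ := exists_affine_between_of_mem_interior hfr hg hqint
    (hfr.continuousOn_interior.continuousAt (isOpen_interior.mem_nhds hqint)) hqG <| by
      rintro x ⟨hxD, hxG⟩
      rw [mem_preimage, hr x (hG hxG)] at hxD
      simpa only [Function.comp_apply, hr x (hG hxG)] using hgf x ⟨hxD, hxG⟩
  refine ⟨l, c, fun x hx => ?_, hlG⟩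
  have hrx := hr x (subset_affineSpan ℝ D hx)
  simpa only [Function.comp_apply, hrx] using hlD x (by rwa [mem_preimage, hrx])

end IntrinsicInterior

section Optimality

variable {E : Type*} [NormedAddCommGroup E] [NormedSpace ℝ E] {D G : Set E} {f h : E → ℝ} {a : E}

theorem exists_subgradient_and_neg_subgradient_of_isMinOn_add [FiniteDimensional ℝ E]
    (hf : ConvexOn ℝ D f) (hh : ConvexOn ℝ G h) (hG : G ⊆ affineSpan ℝ D) {q : E}
    (hqD : q ∈ intrinsicInterior ℝ D) (hqG : q ∈ G) (haD : a ∈ D) (haG : a ∈ G)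
    (hmin : IsMinOn (fun x => f x + h x) (D ∩ G) a) :
    ∃ l : E →L[ℝ] ℝ, (∀ x ∈ D, f a + l (x - a) ≤ f x) ∧ ∀ x ∈ G, h a + (-l) (x - a) ≤ h x := by
  obtain ⟨l, c, hlD, hlG⟩ := exists_affine_between_of_mem_intrinsicInterior hf
    ((concaveOn_const (f a + h a) hh.1).sub hh) hG hqD hqG fun x hx => by
      simpa [add_comm] using hmin hx
  have hla : l a + c = f a := le_antisymm (hlD a haD) (by simpa using hlG a haG)
  refine ⟨l, fun x hx => ?_, fun x hx => ?_⟩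
  · rw [map_sub]
    linarith [hlD x hx]
  · have := hlG x hx
    rw [neg_apply, map_sub]
    simp only [Pi.sub_apply] at this
    linarith

theorem exists_subgradient_of_mem_intrinsicInterior [FiniteDimensional ℝ E] (hf : ConvexOn ℝ D f)
    (ha : a ∈ intrinsicInterior ℝ D) : ∃ l : E →L[ℝ] ℝ, ∀ x ∈ D, f a + l (x - a) ≤ f x := by
  have haD := intrinsicInterior_subset ha
  have hmin : IsMinOn (fun x => f x + (0 : ℝ)) (D ∩ {a}) a :=
    isMinOn_iff.2 fun x hx => by rw [mem_singleton_iff.1 hx.2]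
  obtain ⟨l, hl, -⟩ := exists_subgradient_and_neg_subgradient_of_isMinOn_add hf
    (convexOn_const 0 (convex_singleton a)) (singleton_subset_iff.2 (subset_affineSpan ℝ D haD))
    ha rfl haD rfl hmin
  exact ⟨l, hl⟩

theorem subgradient_le_of_hasFDerivWithinAt {h' m : E →L[ℝ] ℝ} (hG : Convex ℝ G) (ha : a ∈ G)
    (hh : HasFDerivWithinAt h h' G a) (hm : ∀ x ∈ G, h a + m (x - a) ≤ h x) {x : E}
    (hx : x ∈ closure G) : m (x - a) ≤ h' (x - a) := by
  suffices hGle : ∀ y ∈ G, m (y - a) ≤ h' (y - a) from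
    
    closure_minimal (t := {y | m (y - a) ≤ h' (y - a)}) hGle
      (isClosed_le (by fun_prop) (by fun_prop)) hx
  intro y hy
  have hmin : IsMinOn (fun z => h z - m z) G a := fun z hz => by
    have := hm z hz
    rw [map_sub] at this
    simp only [mem_ofPred_eq]
    linarith
  simpa using hmin.localize.hasFDerivWithinAt_nonneg (hh.sub m.hasFDerivWithinAt)
    (sub_mem_posTangentConeAt_of_segment_subset (hG.segment_subset ha hy))

end Optimality

section ExtendedReal

/-- The effective domain `dom φ` of an extended-real-valued function `φ : X → (-∞, ∞]`. Exclusion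
of the value `-∞` is left to hypotheses of the form `φ x ≠ ⊥`. -/
def effDomain {X : Type*} (φ : X → EReal) : Set X :=
  {x | φ x ≠ ⊤}

theorem convexOn_toReal {E : Type*} [AddCommGroup E] [Module ℝ E] {S : Set E} {ψ : E → EReal}
    (hS : Convex ℝ S) (hbot : ∀ x ∈ S, ψ x ≠ ⊥)
    (hconv : ∀ x ∈ S, ∀ y ∈ S, ∀ t : ℝ, 0 ≤ t → t ≤ 1 →
      ψ (t • x + (1 - t) • y) ≤ ((t : ℝ) : EReal) * ψ x + ((1 - t : ℝ) : EReal) * ψ y) :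
    ConvexOn ℝ (S ∩ effDomain ψ) fun x => (ψ x).toReal := by
  have hreal : ∀ x ∈ S ∩ effDomain ψ, ∀ y ∈ S ∩ effDomain ψ, ∀ s t : ℝ, 0 ≤ s → 0 ≤ t →
      s + t = 1 → ψ (s • x + t • y) ≤ ((s * (ψ x).toReal + t * (ψ y).toReal : ℝ) : EReal) := by
    rintro x ⟨hxS, hx⟩ y ⟨hyS, hy⟩ s t hs ht hst
    obtain rfl : t = 1 - s := by linarith
    have h := hconv x hxS y hyS s hs (by linarith)
    rw [← EReal.coe_toReal hx (hbot x hxS), ← EReal.coe_toReal hy (hbot y hyS)] at h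
    exact_mod_cast h
  refine ⟨fun x hx y hy s t hs ht hst => ⟨hS hx.1 hy.1 hs ht hst, ?_⟩,
    fun x hx y hy s t hs ht hst => ?_⟩
  · exact ((hreal x hx y hy s t hs ht hst).trans_lt (EReal.coe_lt_top _)).ne
  · exact EReal.toReal_le_toReal (hreal x hx y hy s t hs ht hst)
      (hbot _ (hS hx.1 hy.1 hs ht hst)) (EReal.coe_ne_top _)

variable {E : Type*} [NormedAddCommGroup E] [NormedSpace ℝ E] {φ ψ : E → EReal}

theorem mem_effDomain_of_subdiff_nonempty (htop : ∃ x, ψ x ≠ ⊤) {x : E}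
    (hx : (ERealSubdiff ψ x).Nonempty) : x ∈ effDomain ψ := by
  obtain ⟨g, hg⟩ := hx
  obtain ⟨y, hy⟩ := htop
  intro h
  have hle := hg y
  rw [h, EReal.top_add_coe, top_le_iff] at hle
  exact hy hle

theorem mem_subdiff_iff_toReal (hbot : ∀ x, φ x ≠ ⊥) {x : E} (hx : x ∈ effDomain φ)
    {g : E →L[ℝ] ℝ} : g ∈ ERealSubdiff φ x ↔
      ∀ y ∈ effDomain φ, (φ x).toReal + g (y - x) ≤ (φ y).toReal := by
  refine forall_congr' fun y => ?_
  by_cases hy : φ y = ⊤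
  · simp [hy, effDomain]
  · rw [← EReal.coe_toReal hx (hbot x), ← EReal.coe_toReal hy (hbot y)]
    simp only [effDomain, mem_ofPred_eq, ne_eq, hy, not_false_eq_true, forall_const,
      EReal.toReal_coe]
    exact_mod_cast Iff.rfl

theorem subdiff_nonempty_of_mem_intrinsicInterior [FiniteDimensional ℝ E]
    (hbot : ∀ x, φ x ≠ ⊥) (hφ : ConvexOn ℝ (effDomain φ) fun x => (φ x).toReal) {x : E}
    (hx : x ∈ intrinsicInterior ℝ (effDomain φ)) : (ERealSubdiff φ x).Nonempty := by
  obtain ⟨l, hl⟩ := exists_subgradient_of_mem_intrinsicInterior hφ hx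
  exact ⟨l, (mem_subdiff_iff_toReal hbot (intrinsicInterior_subset hx)).2 hl⟩

theorem intrinsicInterior_effDomain_subset [FiniteDimensional ℝ E] (hφ_bot : ∀ x, φ x ≠ ⊥)
    (hφ : ConvexOn ℝ (effDomain φ) fun x => (φ x).toReal) (hψ_top : ∃ x, ψ x ≠ ⊤)
    (hdom : {x | (ERealSubdiff φ x).Nonempty} ⊆ {x | (ERealSubdiff ψ x).Nonempty}) :
    intrinsicInterior ℝ (effDomain φ) ⊆ effDomain φ ∩ effDomain ψ := fun _ hx =>
  ⟨intrinsicInterior_subset hx, mem_effDomain_of_subdiff_nonempty hψ_top <|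
    hdom <| subdiff_nonempty_of_mem_intrinsicInterior hφ_bot hφ hx⟩

/-- The Bregman divergence `V_ψ(x, y) = ψ(x) - ψ(y) - ⟨∇ψ(y), x - y⟩` of an extended-real-valued
function. The gradient `∇ψ(y)` is passed as the argument `g`. -/
noncomputable def bregmanDiv (ψ : E → EReal) (g : E →L[ℝ] ℝ) (x y : E) : EReal :=
  ψ x - ψ y - ((g (x - y) : ℝ) : EReal)

theorem bregmanDiv_eq_add_coe (ψ : E → EReal) (g : E →L[ℝ] ℝ) {y : E} (hbot : ψ y ≠ ⊥)
    (hy : y ∈ effDomain ψ) (x : E) :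
    bregmanDiv ψ g x y = ψ x + ((-(ψ y).toReal - g (x - y) : ℝ) : EReal) := by
  rw [bregmanDiv, ← EReal.coe_toReal hy hbot]
  simp only [sub_eq_add_neg, EReal.toReal_coe, EReal.coe_add, EReal.coe_neg, add_assoc]

theorem mem_effDomain_and_isMinOn_toReal_of_forall_le (hφ_bot : ∀ x, φ x ≠ ⊥)
    (hψ_bot : ∀ x, ψ x ≠ ⊥) (hne : (effDomain φ ∩ effDomain ψ).Nonempty) {g : E →L[ℝ] ℝ}
    {a b : E} (hb : b ∈ effDomain ψ)
    (hmin : ∀ x, φ a + bregmanDiv ψ g a b ≤ φ x + bregmanDiv ψ g x b) :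
    a ∈ effDomain φ ∩ effDomain ψ ∧
      IsMinOn (fun x => (φ x).toReal + ((ψ x).toReal - g x)) (effDomain φ ∩ effDomain ψ) a := by
  simp only [bregmanDiv_eq_add_coe ψ g (hψ_bot b) hb, ← add_assoc] at hmin
  have hsum : ∀ x, φ x + ψ x ≠ ⊤ ↔ x ∈ effDomain φ ∩ effDomain ψ := fun x =>
    EReal.add_ne_top_iff_ne_top₂ (hφ_bot x) (hψ_bot x)
  have ha : a ∈ effDomain φ ∩ effDomain ψ := by
    obtain ⟨p, hp⟩ := hne
    have hlt := (hmin p).trans_lt (EReal.add_lt_top ((hsum p).2 hp) (EReal.coe_ne_top _))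
    refine (hsum a).1 fun htop => ?_
    rw [htop, EReal.top_add_coe] at hlt
    exact hlt.false
  refine ⟨ha, fun x hx => ?_⟩
  have h := hmin x
  rw [← EReal.coe_toReal ha.1 (hφ_bot a), ← EReal.coe_toReal ha.2 (hψ_bot a),
    ← EReal.coe_toReal hx.1 (hφ_bot x), ← EReal.coe_toReal hx.2 (hψ_bot x)] at h
  norm_cast at h
  rw [map_sub, map_sub] at h
  simp only [mem_ofPred_eq]
  linarith

end ExtendedReal

theorem non_euclidean_second_prox_theorem_general {E : Type*} [NormedAddCommGroup E]
    [NormedSpace ℝ E] [FiniteDimensional ℝ E] (ψ φ : E → EReal) (ψ' : E → E →L[ℝ] ℝ)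
    (hψ_bot : ∀ x, ψ x ≠ ⊥) (hψ_top : ∃ x, ψ x ≠ ⊤)
    (hψ_convex : ∀ x ∈ effDomain φ, ∀ y ∈ effDomain φ, ∀ t : ℝ, 0 ≤ t → t ≤ 1 →
      ψ (t • x + (1 - t) • y) ≤ ((t : ℝ) : EReal) * ψ x + ((1 - t : ℝ) : EReal) * ψ y)
    (hψ_diff : ∀ x, (ERealSubdiff ψ x).Nonempty →
      HasFDerivWithinAt (fun y => (ψ y).toReal) (ψ' x) (effDomain ψ) x)
    (hφ_bot : ∀ x, φ x ≠ ⊥) (hφ_top : ∃ x, φ x ≠ ⊤)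
    (hφ_convex : ∀ x y : E, ∀ t : ℝ, 0 ≤ t → t ≤ 1 →
      φ (t • x + (1 - t) • y) ≤ ((t : ℝ) : EReal) * φ x + ((1 - t : ℝ) : EReal) * φ y)
    (hdom : {x | (ERealSubdiff φ x).Nonempty} ⊆ {x | (ERealSubdiff ψ x).Nonempty})
    {a b : E} (hb : (ERealSubdiff ψ b).Nonempty)
    (hmin : ∀ x, φ a + bregmanDiv ψ (ψ' b) a b ≤ φ x + bregmanDiv ψ (ψ' b) x b) :
    ψ' b - ψ' a ∈ ERealSubdiff φ a := by
  have hφ : ConvexOn ℝ (effDomain φ) fun x => (φ x).toReal := by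
    simpa using convexOn_toReal convex_univ (fun x _ => hφ_bot x) fun x _ y _ => hφ_convex x y
  have hψ : ConvexOn ℝ (effDomain φ ∩ effDomain ψ) fun x => (ψ x).toReal :=
    convexOn_toReal hφ.1 (fun x _ => hψ_bot x) hψ_convex
  have hri := intrinsicInterior_effDomain_subset hφ_bot hφ hψ_top hdom
  obtain ⟨q, hq⟩ := Set.Nonempty.intrinsicInterior hφ.1 hφ_top
  obtain ⟨ha, hmin_real⟩ := mem_effDomain_and_isMinOn_toReal_of_forall_le hφ_bot
    hψ_bot ⟨q, hri hq⟩ (mem_effDomain_of_subdiff_nonempty hψ_top hb) hmin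
  obtain ⟨l, hlφ, hlψ⟩ := exists_subgradient_and_neg_subgradient_of_isMinOn_add hφ
    (hψ.sub ((ψ' b).toLinearMap.concaveOn hψ.1)) (inter_subset_left.trans (subset_affineSpan ℝ _))
    hq (hri hq) ha.1 ha (hmin_real.on_subset inter_subset_right)
  have hderiv : HasFDerivWithinAt (fun x => (ψ x).toReal - ψ' b x) (ψ' a - ψ' b)
      (effDomain φ ∩ effDomain ψ) a :=
    ((hψ_diff a <| hdom ⟨l, (mem_subdiff_iff_toReal hφ_bot ha.1).2 hlφ⟩).mono
      inter_subset_right).sub (ψ' b).hasFDerivWithinAt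
  refine (mem_subdiff_iff_toReal hφ_bot ha.1).2 fun x hx => ?_
  have hle : (-l) (x - a) ≤ (ψ' a - ψ' b) (x - a) := subgradient_le_of_hasFDerivWithinAt hψ.1 ha
    hderiv hlψ (closure_mono hri (subset_closure_intrinsicInterior hφ.1 hx))
  simp only [neg_apply, sub_apply] at hle ⊢
  linarith [hlφ x hx]

/-- **Non-Euclidean second prox theorem.** Let `ψ : E → (-∞, ∞]` be proper closed convex,
differentiable over `dom(∂ψ)` with gradient `ψ'`, let `φ : E → (-∞, ∞]` be proper closed convex
with `dom(∂φ) ⊆ dom(∂ψ)`, and assume `ψ + I_{dom φ}` is `σ`-strongly convex. Let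
`b ∈ dom(∂ψ)` and `a = argmin_{x ∈ E} { φ(x) + V_ψ(x, b) }`. Then for every `u ∈ dom φ`:
`⟨∇ψ(b) − ∇ψ(a), u − a⟩ ≤ φ(u) − φ(a)`. -/
theorem non_euclidean_second_prox_theorem
    {E : Type*} [NormedAddCommGroup E] [NormedSpace ℝ E] [FiniteDimensional ℝ E]
    (ψ φ : E → EReal) (ψ' : E → E →L[ℝ] ℝ) (σ : ℝ) (hσ : 0 < σ)
    (hψ_bot : ∀ x, ψ x ≠ ⊥) (hψ_top : ∃ x, ψ x ≠ ⊤)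
    (hψ_closed : LowerSemicontinuous ψ)
    (hψ_convex : ∀ x y : E, ∀ t : ℝ, 0 ≤ t → t ≤ 1 →
      ψ (t • x + (1 - t) • y) ≤ ((t : ℝ) : EReal) * ψ x + ((1 - t : ℝ) : EReal) * ψ y)
    (hψ_diff : ∀ x, (ERealSubdiff ψ x).Nonempty →
      HasFDerivWithinAt (fun y => (ψ y).toReal) (ψ' x) {y | ψ y ≠ ⊤} x)
    (hφ_bot : ∀ x, φ x ≠ ⊥) (hφ_top : ∃ x, φ x ≠ ⊤)
    (hφ_closed : LowerSemicontinuous φ)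
    (hφ_convex : ∀ x y : E, ∀ t : ℝ, 0 ≤ t → t ≤ 1 →
      φ (t • x + (1 - t) • y) ≤ ((t : ℝ) : EReal) * φ x + ((1 - t : ℝ) : EReal) * φ y)
    (hdom : {x | (ERealSubdiff φ x).Nonempty} ⊆ {x | (ERealSubdiff ψ x).Nonempty})
    -- `ψ + I_{dom φ}` is `σ`-strongly convex:
    (hstrong : ∀ x y : E, φ x ≠ ⊤ → φ y ≠ ⊤ → ∀ t : ℝ, 0 ≤ t → t ≤ 1 →
      ψ (t • x + (1 - t) • y) + ((σ / 2 * t * (1 - t) * ‖x - y‖ ^ 2 : ℝ) : EReal)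
        ≤ ((t : ℝ) : EReal) * ψ x + ((1 - t : ℝ) : EReal) * ψ y)
    (b : E) (hb : (ERealSubdiff ψ b).Nonempty)
    (a : E)
    (hmin : ∀ x : E,
      φ a + (ψ a - ψ b - ((ψ' b (a - b) : ℝ) : EReal))
        ≤ φ x + (ψ x - ψ b - ((ψ' b (x - b) : ℝ) : EReal)))
    (u : E) (hu : φ u ≠ ⊤) :
    ((ψ' b (u - a) - ψ' a (u - a) : ℝ) : EReal) ≤ φ u - φ a := by
  rw [EReal.le_sub_iff_add_le (.inl (hφ_bot a)) (.inr hu), add_comm]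
  exact non_euclidean_second_prox_theorem_general ψ φ ψ' hψ_bot hψ_top
    (fun x _ y _ => hψ_convex x y) hψ_diff hφ_bot hφ_top hφ_convex hdom hb hmin u
end

section
/- Let Q ⊆ E be a compact convex set, ψ : Q → ℝ a differentiable σ-strongly convex prox-function (σ > 0), g ∈ E*, γ > 0, y ∈ Q, and let x⁺ = argmin_{x ∈ Q} { ⟨g, x⟩ + (1/γ) V_ψ(x, y) }. Then for every u ∈ Q: γ ⟨g, x⁺ − u⟩ ≤ V_ψ(u, y) − V_ψ(u, x⁺) − (σ/2) ‖x⁺ − y‖². -/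
/-- The Bregman divergence `V_ψ(x, y) = ψ(x) − ψ(y) − ⟨∇ψ(y), x − y⟩` associated with a
differentiable function `ψ` with gradient `ψ'`. -/
noncomputable def bregman {E : Type*} [NormedAddCommGroup E] [NormedSpace ℝ E]
    (ψ : E → ℝ) (ψ' : E → E →L[ℝ] ℝ) (x y : E) : ℝ :=
  ψ x - ψ y - ψ' y (x - y)

/-!
Comparing the convexity inequality for `f` along the segment from a minimiser `x` of `f + h` to `u`
with the derivative of `h` at `x` gives `f x - f u ≤ h' (u - x)`, with no derivative of `f`. For
`h = (1/γ) V_ψ(·, y)` the right-hand side is `(1/γ) ⟨∇ψ(x) - ∇ψ(y), u - x⟩`, which splits as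
`(1/γ) (V_ψ(u, y) - V_ψ(u, x) - V_ψ(x, y))`; convexity inequalities along
segments also bound `V_ψ(x, y)` from below by the modulus of convexity of `ψ`.
-/

section

open Set
open AffineMap (lineMap lineMap_apply_module lineMap_apply_zero hasDerivWithinAt_lineMap)

variable {E : Type*} [NormedAddCommGroup E] [NormedSpace ℝ E] {Q : Set E}

theorem apply_sub_le_of_lineMap_le {h : E → ℝ} {h' : E →L[ℝ] ℝ} {p : ℝ → ℝ} {a : ℝ} {x u : E}
    (hseg : segment ℝ x u ⊆ Q) (hh : HasFDerivWithinAt h h' Q x)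
    (hp : HasDerivWithinAt p a (Icc 0 1) 0) (hp₀ : p 0 = h x)
    (hle : ∀ t ∈ Icc (0 : ℝ) 1, h (lineMap x u t) ≤ p t) : h' (u - x) ≤ a := by
  have hsegment : HasDerivWithinAt (fun t : ℝ => h (lineMap x u t)) (h' (u - x)) (Icc 0 1) 0 :=
    HasFDerivWithinAt.comp_hasDerivWithinAt 0 (by simpa only [lineMap_apply_zero] using hh)
      hasDerivWithinAt_lineMap fun t ht =>
        hseg (segment_eq_image_lineMap ℝ x u ▸ mem_image_of_mem _ ht)
  have hmin : IsMinOn (fun t : ℝ => p t - h (lineMap x u t)) (Icc 0 1) 0 := fun t ht => by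
    simpa [hp₀] using hle t ht
  have hnonneg := hmin.localize.hasFDerivWithinAt_nonneg (hp.sub hsegment).hasFDerivWithinAt
    (sub_mem_posTangentConeAt_of_segment_subset (segment_eq_Icc zero_le_one).subset)
  simpa using hnonneg

theorem sub_le_apply_sub_of_isMinOn_add {f h : E → ℝ} {h' : E →L[ℝ] ℝ} {x u : E}
    (hf : ConvexOn ℝ Q f) (hh : HasFDerivWithinAt h h' Q x) (hx : x ∈ Q) (hu : u ∈ Q)
    (hmin : IsMinOn (fun z => f z + h z) Q x) : f x - f u ≤ h' (u - x) := by
  have hp : HasDerivWithinAt (fun t : ℝ => -h x + t * (f u - f x)) (f u - f x) (Icc 0 1) 0 := by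
    simpa using ((hasDerivWithinAt_id (0 : ℝ) _).mul_const (f u - f x)).const_add (-h x)
  have hle : ∀ t ∈ Icc (0 : ℝ) 1, -h (lineMap x u t) ≤ -h x + t * (f u - f x) := by
    intro t ht
    have hconvex : f (lineMap x u t) ≤ (1 - t) * f x + t * f u := by
      simpa only [lineMap_apply_module, smul_eq_mul] using
        hf.2 hx hu (sub_nonneg.2 ht.2) ht.1 (sub_add_cancel 1 t)
    have hvalue : f x + h x ≤ f (lineMap x u t) + h (lineMap x u t) :=
      hmin (hf.1.lineMap_mem hx hu ht)
    linarith
  have hderiv : -h' (u - x) ≤ f u - f x :=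
    apply_sub_le_of_lineMap_le (hf.1.segment_subset hx hu) hh.neg hp (by simp) hle
  linarith

variable {ψ : E → ℝ} {ψ' : E → E →L[ℝ] ℝ} {φ : ℝ → ℝ} {γ : ℝ} {x y : E}

theorem le_bregman_of_uniformConvexOn (hψ : UniformConvexOn Q φ ψ)
    (hψ' : HasFDerivWithinAt ψ (ψ' y) Q y) (hx : x ∈ Q) (hy : y ∈ Q) :
    φ ‖x - y‖ ≤ bregman ψ ψ' x y := by
  have hp : HasDerivWithinAt
      (fun t : ℝ => (1 - t) * ψ y + t * ψ x - (1 - t) * t * φ ‖x - y‖)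
      (ψ x - ψ y - φ ‖x - y‖) (Icc 0 1) 0 := by
    have hid := hasDerivWithinAt_id (0 : ℝ) (Icc 0 1)
    have hid' := hid.const_sub 1
    refine (((hid'.mul_const (ψ y)).add (hid.mul_const (ψ x))).sub
      ((hid'.mul hid).mul_const (φ ‖x - y‖))).congr_deriv ?_
    simp only [id]
    ring
  have hle : ∀ t ∈ Icc (0 : ℝ) 1,
      ψ (lineMap y x t) ≤ (1 - t) * ψ y + t * ψ x - (1 - t) * t * φ ‖x - y‖ := by
    intro t ht
    simpa only [lineMap_apply_module, smul_eq_mul, norm_sub_rev y x] using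
      hψ.2 hy hx (sub_nonneg.2 ht.2) ht.1 (sub_add_cancel 1 t)
  have hderiv : ψ' y (x - y) ≤ ψ x - ψ y - φ ‖x - y‖ :=
    apply_sub_le_of_lineMap_le (hψ.1.segment_subset hy hx) hψ' hp (by simp) hle
  rw [bregman]
  linarith

theorem hasFDerivWithinAt_bregman_left (hψ' : HasFDerivWithinAt ψ (ψ' x) Q x) :
    HasFDerivWithinAt (fun z => bregman ψ ψ' z y) (ψ' x - ψ' y) Q x := by
  simp only [bregman, map_sub]
  exact (hψ'.sub_const (ψ y)).sub ((ψ' y).hasFDerivWithinAt.sub_const _)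

theorem bregman_three_point (ψ : E → ℝ) (ψ' : E → E →L[ℝ] ℝ) (u x y : E) :
    (ψ' x - ψ' y) (u - x) = bregman ψ ψ' u y - bregman ψ ψ' u x - bregman ψ ψ' x y := by
  simp only [bregman, map_sub, sub_apply]
  ring

theorem mul_sub_le_bregman_of_isMinOn {f : E → ℝ} {u : E} (hf : ConvexOn ℝ Q f)
    (hψ' : HasFDerivWithinAt ψ (ψ' x) Q x) (hγ : 0 < γ) (hx : x ∈ Q) (hu : u ∈ Q)
    (hmin : IsMinOn (fun z => f z + 1 / γ * bregman ψ ψ' z y) Q x) :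
    γ * (f x - f u) ≤ bregman ψ ψ' u y - bregman ψ ψ' u x - bregman ψ ψ' x y := by
  have hopt : f x - f u ≤ 1 / γ * (ψ' x - ψ' y) (u - x) :=
    sub_le_apply_sub_of_isMinOn_add hf
      ((hasFDerivWithinAt_bregman_left hψ').const_mul (1 / γ)) hx hu hmin
  calc γ * (f x - f u) ≤ (ψ' x - ψ' y) (u - x) := by
        rwa [one_div, le_inv_mul_iff₀ hγ] at hopt
    _ = bregman ψ ψ' u y - bregman ψ ψ' u x - bregman ψ ψ' x y := bregman_three_point ψ ψ' u x y

theorem mirror_prox_step_general {f : E → ℝ} {u : E} (hf : ConvexOn ℝ Q f)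
    (hψ : UniformConvexOn Q φ ψ) (hψx : HasFDerivWithinAt ψ (ψ' x) Q x)
    (hψy : HasFDerivWithinAt ψ (ψ' y) Q y) (hγ : 0 < γ) (hx : x ∈ Q) (hy : y ∈ Q) (hu : u ∈ Q)
    (hmin : IsMinOn (fun z => f z + 1 / γ * bregman ψ ψ' z y) Q x) :
    γ * (f x - f u) ≤ bregman ψ ψ' u y - bregman ψ ψ' u x - φ ‖x - y‖ :=
  (mul_sub_le_bregman_of_isMinOn hf hψx hγ hx hu hmin).trans
    (sub_le_sub_left (le_bregman_of_uniformConvexOn hψ hψy hx hy) _)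

end

/-- Let `Q ⊆ E` be compact convex, `ψ` a differentiable `σ`-strongly convex prox-function
(`σ > 0`), `g ∈ E*`, `γ > 0`, `y ∈ Q`, and `x⁺ = argmin_{x ∈ Q} { ⟨g, x⟩ + (1/γ) V_ψ(x, y) }`.
Then for every `u ∈ Q`: `γ ⟨g, x⁺ − u⟩ ≤ V_ψ(u, y) − V_ψ(u, x⁺) − (σ/2) ‖x⁺ − y‖²`. -/
theorem mirror_prox_step
    {E : Type*} [NormedAddCommGroup E] [NormedSpace ℝ E] [FiniteDimensional ℝ E]
    (Q : Set E) (hQcomp : IsCompact Q) (hQconv : Convex ℝ Q)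
    (ψ : E → ℝ) (ψ' : E → E →L[ℝ] ℝ) (σ : ℝ) (hσ : 0 < σ)
    (hψdiff : ∀ x ∈ Q, HasFDerivWithinAt ψ (ψ' x) Q x)
    (hψstrong : StrongConvexOn Q σ ψ)
    (g : E →L[ℝ] ℝ) (γ : ℝ) (hγ : 0 < γ) (y : E) (hy : y ∈ Q)
    (xp : E) (hxpQ : xp ∈ Q)
    (hxp : IsMinOn (fun x => g x + (1 / γ) * bregman ψ ψ' x y) Q xp) :
    ∀ u ∈ Q,
      γ * g (xp - u) ≤
        bregman ψ ψ' u y - bregman ψ ψ' u xp - σ / 2 * ‖xp - y‖ ^ 2 := by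
  intro u hu
  rw [map_sub]
  exact mirror_prox_step_general (g.toLinearMap.convexOn hQconv) hψstrong (hψdiff xp hxpQ)
    (hψdiff y hy) hγ hxpQ hy hu hxp
end

section
/- Let a ∈ [0, 1], −1 ≤ m ≤ 0, σ > 0, R > 0, and g_1, …, g_N positive reals. Set G_k = max_{j=1,…,k} { g_j · j^{(1−a)/2} } and γ_k = √(2σR)/(G_k k^{a/2}). Then ( R / γ_N^{m+1} + ∑_{k=1}^N (γ_k^{1−m}/(2σ)) g_k² ) / ( ∑_{k=1}^N γ_k^{−m} ) ≤ √(R/(2σ)) · ( N^{(m+1)/2} + ∑_{k=1}^N k^{(m−1)/2} ) / ( ∑_{k=1}^N k^{m/2} ) · max_{k=1,…,N} g_k. -/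
/-!
Put `Γ_k = G_k k^{a/2}`, so that `γ_k = c / Γ_k` with `c = √(2σR)`. Since `R = c² / (2σ)`, the
left-hand side is homogeneous in `c` and equals
`√(R/(2σ)) · (Γ_N^{m+1} + ∑ Γ_k^{m-1} g_k²) / ∑ Γ_k^m`.
With `M = max_k g_k`, the running maximum gives `g_k √k ≤ Γ_k ≤ M √k`. As `-1 ≤ m ≤ 0`, the upper
bound on `Γ_k` bounds `Γ_k^{m+1}` above and `Γ_k^m` below, while
`Γ_k^{m-1} g_k² = Γ_k^{m+1} (g_k / Γ_k)²` and the lower bound gives `(g_k / Γ_k)² ≤ 1 / k`.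
-/

open Finset

lemma mul_sqrt_rpow {M x : ℝ} (hM : 0 ≤ M) (hx : 0 ≤ x) (p : ℝ) :
    (M * √x) ^ p = M ^ p * x ^ (p / 2) := by
  rw [Real.mul_rpow hM (Real.sqrt_nonneg x), Real.rpow_div_two_eq_sqrt p hx]

lemma rpow_mul_rpow_eq_sqrt {x : ℝ} (hx : 0 < x) (a : ℝ) :
    x ^ ((1 - a) / 2) * x ^ (a / 2) = √x := by
  rw [← Real.rpow_add hx, Real.sqrt_eq_rpow]
  ring_nf

lemma sqrt_mul_div_self_left {d : ℝ} (hd : 0 ≤ d) (r : ℝ) : √(d * r) / d = √(r / d) := by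
  rw [Real.sqrt_mul hd, mul_div_right_comm, Real.sqrt_div_self, Real.sqrt_div' _ hd,
    inv_mul_eq_div]

lemma rpow_sub_one_mul_sq_le {Γ g M x m : ℝ} (hm : -1 ≤ m) (hx : 0 < x) (hM : 0 ≤ M)
    (hΓ : 0 < Γ) (hg : 0 ≤ g) (hlow : g * √x ≤ Γ) (hup : Γ ≤ M * √x) :
    Γ ^ (m - 1) * g ^ 2 ≤ M ^ (m + 1) * x ^ ((m - 1) / 2) := by
  have hratio : g / Γ ≤ 1 / √x := by
    rwa [div_le_div_iff₀ hΓ (Real.sqrt_pos.mpr hx), one_mul]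
  calc Γ ^ (m - 1) * g ^ 2 = Γ ^ (m + 1) * (g / Γ) ^ 2 := by
        rw [show m - 1 = m + 1 - 2 by ring, Real.rpow_sub hΓ, Real.rpow_two]
        ring
    _ ≤ (M * √x) ^ (m + 1) * (1 / √x) ^ 2 := by
        have : 0 ≤ m + 1 := by linarith
        gcongr
    _ = M ^ (m + 1) * x ^ ((m - 1) / 2) := by
        rw [mul_sqrt_rpow hM hx.le, div_pow, one_pow, Real.sq_sqrt hx.le,
          show (m - 1) / 2 = (m + 1) / 2 - 1 by ring, Real.rpow_sub_one hx.ne']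
        ring

section Ratio

variable {ι : Type*} {s : Finset ι} {n : ι} {Γ g : ι → ℝ}

lemma rpow_add_sum_div_sum_rpow_le {x : ι → ℝ} {M m : ℝ} (hm1 : -1 ≤ m) (hm0 : m ≤ 0)
    (hn : n ∈ s) (hM : 0 < M) (hx : ∀ k ∈ s, 0 < x k) (hΓ : ∀ k ∈ s, 0 < Γ k)
    (hg : ∀ k ∈ s, 0 ≤ g k) (hlow : ∀ k ∈ s, g k * √(x k) ≤ Γ k)
    (hup : ∀ k ∈ s, Γ k ≤ M * √(x k)) :
    (Γ n ^ (m + 1) + ∑ k ∈ s, Γ k ^ (m - 1) * g k ^ 2) / ∑ k ∈ s, Γ k ^ m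
      ≤ (x n ^ ((m + 1) / 2) + ∑ k ∈ s, x k ^ ((m - 1) / 2)) / (∑ k ∈ s, x k ^ (m / 2)) * M := by
  have hlast : Γ n ^ (m + 1) ≤ M ^ (m + 1) * x n ^ ((m + 1) / 2) := by
    rw [← mul_sqrt_rpow hM.le (hx n hn).le]
    exact Real.rpow_le_rpow (hΓ n hn).le (hup n hn) (by linarith)
  have hnum : Γ n ^ (m + 1) + ∑ k ∈ s, Γ k ^ (m - 1) * g k ^ 2
      ≤ M ^ (m + 1) * (x n ^ ((m + 1) / 2) + ∑ k ∈ s, x k ^ ((m - 1) / 2)) := by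
    rw [mul_add, mul_sum]
    exact add_le_add hlast <| sum_le_sum fun k hk =>
      rpow_sub_one_mul_sq_le hm1 (hx k hk) hM.le (hΓ k hk) (hg k hk) (hlow k hk) (hup k hk)
  have hden : M ^ m * ∑ k ∈ s, x k ^ (m / 2) ≤ ∑ k ∈ s, Γ k ^ m := by
    rw [mul_sum]
    refine sum_le_sum fun k hk => ?_
    rw [← mul_sqrt_rpow hM.le (hx k hk).le]
    exact Real.rpow_le_rpow_of_nonpos (hΓ k hk) (hup k hk) hm0
  have : 0 < M ^ m := Real.rpow_pos_of_pos hM m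
  have hsum : 0 < ∑ k ∈ s, x k ^ (m / 2) :=
    sum_pos (fun k hk => Real.rpow_pos_of_pos (hx k hk) _) ⟨n, hn⟩
  have hbound : 0 ≤ M ^ (m + 1) * (x n ^ ((m + 1) / 2) + ∑ k ∈ s, x k ^ ((m - 1) / 2)) :=
    mul_nonneg (by positivity) <| add_nonneg (Real.rpow_nonneg (hx n hn).le _) <|
      sum_nonneg fun k hk => Real.rpow_nonneg (hx k hk).le _
  refine (div_le_div₀ hbound hnum (by positivity) hden).trans_eq ?_
  rw [Real.rpow_add_one hM.ne']
  field_simp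

lemma div_rpow_add_sum_div_sum_rpow_neg_eq {γ : ι → ℝ} {c : ℝ} (d m : ℝ) (hc : 0 < c)
    (hn : n ∈ s) (hΓ : ∀ k ∈ s, 0 < Γ k) (hγ : ∀ k ∈ s, γ k = c / Γ k) :
    (c ^ 2 / d / γ n ^ (m + 1) + ∑ k ∈ s, γ k ^ (1 - m) / d * g k ^ 2) / ∑ k ∈ s, γ k ^ (-m)
      = c / d * ((Γ n ^ (m + 1) + ∑ k ∈ s, Γ k ^ (m - 1) * g k ^ 2) / ∑ k ∈ s, Γ k ^ m) := by
  have hpow (p : ℝ) : ∀ k ∈ s, γ k ^ (-p) = c ^ (-p) * Γ k ^ p := fun k hk => by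
    rw [hγ k hk, Real.div_rpow hc.le (hΓ k hk).le, Real.rpow_neg (hΓ k hk).le, div_inv_eq_mul]
  have hcm : c ^ (1 - m) = c * c ^ (-m) := by
    rw [sub_eq_add_neg, Real.rpow_add hc, Real.rpow_one]
  have hlast : c ^ 2 / d / γ n ^ (m + 1) = c / d * c ^ (-m) * Γ n ^ (m + 1) := by
    have hγn : 0 ≤ γ n := by rw [hγ n hn]; exact (div_pos hc (hΓ n hn)).le
    rw [div_eq_mul_inv _ (γ n ^ _), ← Real.rpow_neg hγn, hpow _ n hn, neg_add,
      ← sub_eq_add_neg, Real.rpow_sub_one hc.ne']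
    field_simp
  have hterm : ∀ k ∈ s, γ k ^ (1 - m) / d * g k ^ 2
      = c / d * c ^ (-m) * (Γ k ^ (m - 1) * g k ^ 2) := fun k hk => by
    rw [← neg_sub m 1, hpow _ k hk, neg_sub, hcm]
    ring
  rw [hlast, sum_congr rfl hterm, sum_congr rfl (hpow m), ← mul_sum, ← mul_sum, ← mul_add,
    mul_comm (c / d), mul_assoc, mul_div_mul_left _ _ (Real.rpow_pos_of_pos hc _).ne',
    mul_div_assoc]

end Ratio

section RunningMax

variable {g : ℕ → ℝ} {a : ℝ} {k : ℕ}

lemma mul_sqrt_le_sup'_mul_rpow (hk : 1 ≤ k) :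
    g k * √k ≤ (Icc 1 k).sup' (nonempty_Icc.mpr hk) (fun j => g j * (j : ℝ) ^ ((1 - a) / 2))
      * (k : ℝ) ^ (a / 2) := by
  rw [← rpow_mul_rpow_eq_sqrt (Nat.cast_pos.mpr hk) a, ← mul_assoc]
  gcongr
  exact le_sup' (fun j : ℕ => g j * (j : ℝ) ^ ((1 - a) / 2)) (right_mem_Icc.mpr hk)

lemma sup'_mul_rpow_le_mul_sqrt {M : ℝ} (ha : a ≤ 1) (hk : 1 ≤ k) (hM : 0 ≤ M)
    (hg : ∀ j ∈ Icc 1 k, g j ≤ M) :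
    (Icc 1 k).sup' (nonempty_Icc.mpr hk) (fun j => g j * (j : ℝ) ^ ((1 - a) / 2))
      * (k : ℝ) ^ (a / 2) ≤ M * √k := by
  rw [← rpow_mul_rpow_eq_sqrt (Nat.cast_pos.mpr hk) a, ← mul_assoc]
  gcongr
  refine sup'_le _ _ fun j hj => ?_
  have : 0 ≤ (1 - a) / 2 := by linarith
  gcongr
  · exact hg j hj
  · exact (mem_Icc.mp hj).2

lemma sup'_mul_rpow_mul_rpow_pos (hk : 1 ≤ k) (hg : 0 < g 1) :
    0 < (Icc 1 k).sup' (nonempty_Icc.mpr hk) (fun j => g j * (j : ℝ) ^ ((1 - a) / 2))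
      * (k : ℝ) ^ (a / 2) := by
  have hfirst := le_sup' (fun j : ℕ => g j * (j : ℝ) ^ ((1 - a) / 2)) (left_mem_Icc.mpr hk)
  rw [Nat.cast_one, Real.one_rpow, mul_one] at hfirst
  exact mul_pos (hg.trans_le hfirst) (Real.rpow_pos_of_pos (Nat.cast_pos.mpr hk) _)

end RunningMax

theorem algebra_estimate_m_nonpos_general
    (N : ℕ) (hN : 1 ≤ N) (a m σ R : ℝ)
    (ha1 : a ≤ 1) (hm1 : -1 ≤ m) (hm0 : m ≤ 0)
    (hσ : 0 < σ) (hR : 0 < R)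
    (g G γ : ℕ → ℝ)
    (hg1 : 0 < g 1) (hg : ∀ k, 1 ≤ k → k ≤ N → 0 ≤ g k)
    (hG : ∀ k (hk : 1 ≤ k), k ≤ N →
      G k = (Icc 1 k).sup' (nonempty_Icc.mpr hk)
        (fun j => g j * (j : ℝ) ^ ((1 - a) / 2)))
    (hγ : ∀ k, 1 ≤ k → k ≤ N →
      γ k = √(2 * σ * R) / (G k * (k : ℝ) ^ (a / 2))) :
    (R / γ N ^ (m + 1)
        + ∑ k ∈ Icc 1 N, γ k ^ (1 - m) / (2 * σ) * g k ^ 2)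
      / (∑ k ∈ Icc 1 N, γ k ^ (-m))
    ≤ √(R / (2 * σ))
        * (((N : ℝ) ^ ((m + 1) / 2) + ∑ k ∈ Icc 1 N, (k : ℝ) ^ ((m - 1) / 2))
            / (∑ k ∈ Icc 1 N, (k : ℝ) ^ (m / 2)))
        * (Icc 1 N).sup' (nonempty_Icc.mpr hN) g := by
  set M := (Icc 1 N).sup' (nonempty_Icc.mpr hN) g
  have hgM : ∀ k ∈ Icc 1 N, g k ≤ M := fun k hk => le_sup' g hk
  have hM : 0 < M := hg1.trans_le (hgM 1 (left_mem_Icc.mpr hN))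
  have hc : 0 < √(2 * σ * R) := Real.sqrt_pos.mpr (by positivity)
  have hcR : √(2 * σ * R) ^ 2 / (2 * σ) = R := by
    rw [Real.sq_sqrt (by positivity), mul_div_cancel_left₀ R (by positivity)]
  have hΓ : ∀ k ∈ Icc 1 N, 0 < G k * (k : ℝ) ^ (a / 2) ∧
      g k * √k ≤ G k * (k : ℝ) ^ (a / 2) ∧ G k * (k : ℝ) ^ (a / 2) ≤ M * √k := fun k hk => by
    obtain ⟨h1k, hkN⟩ := mem_Icc.mp hk
    rw [hG k h1k hkN]
    exact ⟨sup'_mul_rpow_mul_rpow_pos h1k hg1, mul_sqrt_le_sup'_mul_rpow h1k,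
      sup'_mul_rpow_le_mul_sqrt ha1 h1k hM.le fun j hj => hgM j (Icc_subset_Icc_right hkN hj)⟩
  have hscale := div_rpow_add_sum_div_sum_rpow_neg_eq (g := g) (2 * σ) m hc
    (right_mem_Icc.mpr hN) (fun k hk => (hΓ k hk).1)
    fun k hk => hγ k (mem_Icc.mp hk).1 (mem_Icc.mp hk).2
  rw [hcR, sqrt_mul_div_self_left (by positivity)] at hscale
  rw [hscale, mul_assoc]
  gcongr
  exact rpow_add_sum_div_sum_rpow_le hm1 hm0 (right_mem_Icc.mpr hN) hM
    (fun k hk => Nat.cast_pos.mpr (mem_Icc.mp hk).1) (fun k hk => (hΓ k hk).1)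
    (fun k hk => hg k (mem_Icc.mp hk).1 (mem_Icc.mp hk).2) (fun k hk => (hΓ k hk).2.1)
    fun k hk => (hΓ k hk).2.2

/-- The algebraic estimate of the main convergence theorem in the case `−1 ≤ m ≤ 0`,
with `G_k = max_{j=1,…,k}{ g_j · j^{(1−a)/2} }` and `γ_k = √(2σR)/(G_k k^{a/2})`:
`(R/γ_N^{m+1} + ∑ γ_k^{1−m} g_k²/(2σ)) / (∑ γ_k^{−m})
  ≤ √(R/(2σ)) · (N^{(m+1)/2} + ∑ k^{(m−1)/2}) / (∑ k^{m/2}) · max_k g_k`. -/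
theorem algebra_estimate_m_nonpos
    (N : ℕ) (hN : 1 ≤ N) (a m σ R : ℝ)
    (ha0 : 0 ≤ a) (ha1 : a ≤ 1) (hm1 : -1 ≤ m) (hm0 : m ≤ 0)
    (hσ : 0 < σ) (hR : 0 < R)
    (g G γ : ℕ → ℝ)
    (hg : ∀ k, 1 ≤ k → k ≤ N → 0 < g k)
    (hG : ∀ k (hk : 1 ≤ k), k ≤ N →
      G k = (Finset.Icc 1 k).sup' (Finset.nonempty_Icc.mpr hk)
        (fun j => g j * (j : ℝ) ^ ((1 - a) / 2)))
    (hγ : ∀ k, 1 ≤ k → k ≤ N →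
      γ k = Real.sqrt (2 * σ * R) / (G k * (k : ℝ) ^ (a / 2))) :
    (R / γ N ^ (m + 1)
        + ∑ k ∈ Finset.Icc 1 N, γ k ^ (1 - m) / (2 * σ) * g k ^ 2)
      / (∑ k ∈ Finset.Icc 1 N, γ k ^ (-m))
    ≤ Real.sqrt (R / (2 * σ))
        * (((N : ℝ) ^ ((m + 1) / 2) + ∑ k ∈ Finset.Icc 1 N, (k : ℝ) ^ ((m - 1) / 2))
            / (∑ k ∈ Finset.Icc 1 N, (k : ℝ) ^ (m / 2)))
        * (Finset.Icc 1 N).sup' (Finset.nonempty_Icc.mpr hN) g := by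
  exact algebra_estimate_m_nonpos_general N hN a m σ R ha1 hm1 hm0 hσ hR g G γ (hg 1 le_rfl hN)
    (fun k h1k hkN => (hg k h1k hkN).le) hG hγ
end

section
/- Let a ∈ [0, 1], −1 ≤ m ≤ 0, σ > 0, R > 0, and g_1, …, g_N positive reals. Set G_k = max_{j=1,…,k} { g_j · j^{(1−a)/2} }, γ_k = √(2σR)/(G_k k^{a/2}), and ω_k^{(m)} = γ_k^{−m}. Then for any H ≥ 0 (playing the role of h(x^1)): ω_1^{(m)} H / ( ∑_{k=1}^N ω_k^{(m)} ) ≤ ( g_1 / max_{k=1,…,N} g_k )^m · H / ( ∑_{k=1}^N k^{m/2} ). -/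
/-!
Write `M = max_{k ≤ N} g_k` and `γ_k = c / (G_k k^q)`, where `G_k = max_{j ≤ k} g_j j^p`. Since
`p ≥ 0`, we have `G_k ≤ M k^p`, so `k^{p+q} γ_k ≥ c / M`, and `c / M = (g_1 / M) γ_1` because
`G_1 = g_1`. Raising `(g_1 / M) γ_1 ≤ k^{p+q} γ_k` to the power `-m ≥ 0` compares the weights with
`k^{m(p+q)}` term by term, and summing over `k` gives the bound.
-/

open Finset

theorem mul_div_sum_le_mul_div_sum {ι K : Type*} [Semifield K] [LinearOrder K]
    [IsStrictOrderedRing K] {s : Finset ι} (hs : s.Nonempty) {v w : ι → K} {x y H : K}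
    (hv : ∀ i ∈ s, 0 < v i) (hw : ∀ i ∈ s, 0 < w i) (h : ∀ i ∈ s, x * v i ≤ y * w i)
    (hH : 0 ≤ H) :
    x * H / ∑ i ∈ s, w i ≤ y * H / ∑ i ∈ s, v i := by
  have hsum : x * ∑ i ∈ s, v i ≤ y * ∑ i ∈ s, w i := by
    simpa only [mul_sum] using sum_le_sum h
  rw [div_le_div_iff₀ (sum_pos hw hs) (sum_pos hv hs), mul_right_comm, mul_right_comm y]
  exact mul_le_mul_of_nonneg_right hsum hH

theorem rpow_neg_mul_rpow_le_rpow_mul_rpow_neg {r t x y m : ℝ} (hr : 0 < r) (ht : 0 < t)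
    (hx : 0 ≤ x) (hy : 0 ≤ y) (hm : m ≤ 0) (h : r * x ≤ t * y) :
    x ^ (-m) * t ^ m ≤ r ^ m * y ^ (-m) := by
  have hpow : (r * x) ^ (-m) ≤ (t * y) ^ (-m) :=
    Real.rpow_le_rpow (mul_nonneg hr.le hx) h (neg_nonneg.mpr hm)
  rw [Real.mul_rpow hr.le hx, Real.mul_rpow ht.le hy, Real.rpow_neg hr.le, Real.rpow_neg ht.le,
    inv_mul_le_iff₀ (Real.rpow_pos_of_pos hr m), mul_left_comm,
    le_inv_mul_iff₀ (Real.rpow_pos_of_pos ht m)] at hpow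
  rwa [mul_comm]

theorem sup'_Icc_mul_rpow_le {g : ℕ → ℝ} {k : ℕ} (hk : 1 ≤ k) {M p : ℝ} (hM : 0 ≤ M) (hp : 0 ≤ p)
    (hg : ∀ j ∈ Icc 1 k, g j ≤ M) :
    (Icc 1 k).sup' (nonempty_Icc.mpr hk) (fun j => g j * (j : ℝ) ^ p) ≤ M * (k : ℝ) ^ p :=
  sup'_le _ _ fun j hj =>
    have hjk : (j : ℝ) ^ p ≤ (k : ℝ) ^ p :=
      Real.rpow_le_rpow j.cast_nonneg (Nat.cast_le.mpr (mem_Icc.mp hj).2) hp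
    mul_le_mul (hg j hj) hjk (by positivity) hM

theorem sup'_Icc_mul_rpow_pos {g : ℕ → ℝ} {k : ℕ} (hk : 1 ≤ k) (p : ℝ) (hg : 0 < g 1) :
    0 < (Icc 1 k).sup' (nonempty_Icc.mpr hk) (fun j => g j * (j : ℝ) ^ p) :=
  (lt_sup'_iff _).mpr ⟨1, left_mem_Icc.mpr hk, by simpa using hg⟩

theorem div_le_rpow_add_mul_div {c G M x p : ℝ} (q : ℝ) (hx : 0 < x) (hc : 0 ≤ c) (hG : 0 < G)
    (hGM : G ≤ M * x ^ p) :
    c / M ≤ x ^ (p + q) * (c / (G * x ^ q)) := by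
  have hM : 0 < M := pos_of_mul_pos_left (hG.trans_le hGM) (by positivity)
  calc c / M = x ^ p * c / (M * x ^ p) := by field_simp
    _ ≤ x ^ p * c / G := by gcongr
    _ = x ^ (p + q) * (c / (G * x ^ q)) := by rw [Real.rpow_add hx]; field_simp

theorem div_sup'_Icc_le_rpow_add_mul_div {g : ℕ → ℝ} (hg : 0 < g 1) {c p : ℝ} (q : ℝ)
    (hc : 0 ≤ c) (hp : 0 ≤ p) {k N : ℕ} (hk : 1 ≤ k) (hkN : k ≤ N) :
    c / (Icc 1 N).sup' (nonempty_Icc.mpr (hk.trans hkN)) g ≤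
      (k : ℝ) ^ (p + q) *
        (c / ((Icc 1 k).sup' (nonempty_Icc.mpr hk) (fun j => g j * (j : ℝ) ^ p) *
          (k : ℝ) ^ q)) := by
  have hgM : ∀ j ∈ Icc 1 N, g j ≤ (Icc 1 N).sup' (nonempty_Icc.mpr (hk.trans hkN)) g :=
    fun j hj => le_sup' g hj
  refine div_le_rpow_add_mul_div q (Nat.cast_pos.mpr hk) hc (sup'_Icc_mul_rpow_pos hk p hg)
    (sup'_Icc_mul_rpow_le hk ?_ hp fun j hj => hgM j (Icc_subset_Icc_right hkN hj))
  exact hg.le.trans (hgM 1 (left_mem_Icc.mpr (hk.trans hkN)))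

theorem composite_initial_weight_bound_general {N : ℕ} (hN : 1 ≤ N) {p q m c : ℝ}
    (hp : 0 ≤ p) (hm : m ≤ 0) (hc : 0 < c) {g G γ ω : ℕ → ℝ} (hg : 0 < g 1)
    (hG : ∀ k (hk : 1 ≤ k), k ≤ N →
      G k = (Icc 1 k).sup' (nonempty_Icc.mpr hk) (fun j => g j * (j : ℝ) ^ p))
    (hγ : ∀ k, 1 ≤ k → k ≤ N → γ k = c / (G k * (k : ℝ) ^ q))
    (hω : ∀ k, 1 ≤ k → k ≤ N → ω k = γ k ^ (-m))
    {H : ℝ} (hH : 0 ≤ H) :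
    ω 1 * H / (∑ k ∈ Icc 1 N, ω k) ≤
      (g 1 / (Icc 1 N).sup' (nonempty_Icc.mpr hN) g) ^ m * H
        / (∑ k ∈ Icc 1 N, (k : ℝ) ^ ((p + q) * m)) := by
  set M := (Icc 1 N).sup' (nonempty_Icc.mpr hN) g
  have hM : 0 < M := hg.trans_le (le_sup' g (left_mem_Icc.mpr hN))
  have hγ_pos : ∀ k, 1 ≤ k → k ≤ N → 0 < γ k := fun k hk hkN => by
    have hG_pos : 0 < G k := hG k hk hkN ▸ sup'_Icc_mul_rpow_pos hk p hg
    rw [hγ k hk hkN]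
    positivity
  have hγ_one : g 1 / M * γ 1 = c / M := by
    have hG_one : G 1 = g 1 := by simp [hG 1 le_rfl hN]
    rw [hγ 1 le_rfl hN, hG_one, Nat.cast_one, Real.one_rpow]
    field_simp
  have hγ_le : ∀ k, 1 ≤ k → k ≤ N → g 1 / M * γ 1 ≤ (k : ℝ) ^ (p + q) * γ k :=
    fun k hk hkN => by
      rw [hγ_one, hγ k hk hkN, hG k hk hkN]
      exact div_sup'_Icc_le_rpow_add_mul_div hg q hc.le hp hk hkN
  refine mul_div_sum_le_mul_div_sum (nonempty_Icc.mpr hN) ?_ ?_ ?_ hH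
  all_goals
    intro k hk_mem
    obtain ⟨hk, hkN⟩ := mem_Icc.mp hk_mem
  · positivity
  · rw [hω k hk hkN]
    exact Real.rpow_pos_of_pos (hγ_pos k hk hkN) _
  · rw [hω 1 le_rfl hN, hω k hk hkN, Real.rpow_mul k.cast_nonneg]
    exact rpow_neg_mul_rpow_le_rpow_mul_rpow_neg (by positivity) (by positivity)
      (hγ_pos 1 le_rfl hN).le (hγ_pos k hk hkN).le hm (hγ_le k hk hkN)

/-- With `G_k = max_{j=1,…,k}{g_j j^{(1−a)/2}}`, `γ_k = √(2σR)/(G_k k^{a/2})`,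
`ω_k = γ_k^{−m}` for `−1 ≤ m ≤ 0`, and any `H ≥ 0`:
`ω_1 H / (∑ ω_k) ≤ (g_1 / max_k g_k)^m · H / (∑ k^{m/2})`. -/
theorem composite_initial_weight_bound
    (N : ℕ) (hN : 1 ≤ N) (a m σ R : ℝ)
    (ha0 : 0 ≤ a) (ha1 : a ≤ 1) (hm1 : -1 ≤ m) (hm0 : m ≤ 0)
    (hσ : 0 < σ) (hR : 0 < R)
    (g G γ ω : ℕ → ℝ)
    (hg : ∀ k, 1 ≤ k → k ≤ N → 0 < g k)
    (hG : ∀ k (hk : 1 ≤ k), k ≤ N →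
      G k = (Finset.Icc 1 k).sup' (Finset.nonempty_Icc.mpr hk)
        (fun j => g j * (j : ℝ) ^ ((1 - a) / 2)))
    (hγ : ∀ k, 1 ≤ k → k ≤ N →
      γ k = Real.sqrt (2 * σ * R) / (G k * (k : ℝ) ^ (a / 2)))
    (hω : ∀ k, 1 ≤ k → k ≤ N → ω k = γ k ^ (-m))
    (H : ℝ) (hH : 0 ≤ H) :
    ω 1 * H / (∑ k ∈ Finset.Icc 1 N, ω k) ≤
      (g 1 / (Finset.Icc 1 N).sup' (Finset.nonempty_Icc.mpr hN) g) ^ m * H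
        / (∑ k ∈ Finset.Icc 1 N, (k : ℝ) ^ (m / 2)) := by
  simpa only [show ((1 - a) / 2 + a / 2) * m = m / 2 by ring] using
    composite_initial_weight_bound_general hN (by linarith : 0 ≤ (1 - a) / 2) hm0
      (by positivity : 0 < √(2 * σ * R)) (hg 1 le_rfl hN) hG hγ hω hH
end
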